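/- Let g : ℝ² → ℝ be the radial convex function g(x) = F(‖x‖). Let X : [0,∞) → ℝ² be continuous, twice continuously differentiable on (0,∞), with X(0) = X₀ ≠ 0 and Ẋ(t) → 0 as t → 0⁺, satisfying Ẍ(t) + (3/t)·Ẋ(t) + ∇g(X(t)) = 0 for all t > 0. Then X(t) stays on the ray through X₀ for all time: there is a continuous function ρ : [0,∞) → ℝ with ρ(0) = 1 such that X(t) = ρ(t)·X₀ for all t ≥ 0. -/

import Mathlib

/-- `F(0) = 0`, `F(r) = ∫₀^r du/(−log u)` for `0 < r ≤ e⁻²`,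
`F(r) = F(e⁻²) + (1/2)(r − e⁻²)` for `r ≥ e⁻²`. -/
noncomputable def F (r : ℝ) : ℝ :=
  if r ≤ Real.exp (-2) then ∫ u in (0:ℝ)..r, 1 / (-Real.log u)
  else (∫ u in (0:ℝ)..Real.exp (-2), 1 / (-Real.log u)) + (1/2) * (r - Real.exp (-2))

/-- The radial potential `g(x) = F(‖x‖)`. -/
noncomputable def gRad (x : EuclideanSpace ℝ (Fin 2)) : ℝ := F ‖x‖

namespace RadialAux

noncomputable def psi (u : ℝ) : ℝ := 1 / (-Real.log (min |u| (Real.exp (-2))))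

lemma log_min_neg {u : ℝ} (hu : u ≠ 0) : Real.log (min |u| (Real.exp (-2))) ≤ -2 := by
  have h : 0 < min |u| (Real.exp (-2)) := lt_min (abs_pos.2 hu) (Real.exp_pos _)
  have := Real.log_le_log h (min_le_right _ _)
  rwa [Real.log_exp] at this

lemma psi_zero : psi 0 = 0 := by
  have : min |(0:ℝ)| (Real.exp (-2)) = 0 := by
    rw [abs_zero]; exact min_eq_left (Real.exp_pos _).le
  rw [psi, this]; simp

lemma psi_pos {u : ℝ} (hu : u ≠ 0) : 0 < psi u := by
  have := log_min_neg hu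
  unfold psi
  apply one_div_pos.2
  linarith

lemma psi_nonneg (u : ℝ) : 0 ≤ psi u := by
  by_cases hu : u = 0
  · rw [hu, psi_zero]
  · exact (psi_pos hu).le

lemma psi_cont : Continuous psi := by
  rw [continuous_iff_continuousAt]
  intro u
  by_cases hu : u = 0
  · subst hu
    rw [← continuousWithinAt_compl_self, ContinuousWithinAt, psi_zero]
    have h1 : Filter.Tendsto (fun u : ℝ => min |u| (Real.exp (-2)))
        (nhdsWithin 0 {0}ᶜ) (nhdsWithin 0 (Set.Ioi 0)) := by
      apply tendsto_nhdsWithin_of_tendsto_nhds_of_eventually_within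
      · have : Continuous (fun u : ℝ => min |u| (Real.exp (-2))) := by fun_prop
        have h := this.tendsto 0
        rw [abs_zero, min_eq_left (Real.exp_pos _).le] at h
        exact h.mono_left nhdsWithin_le_nhds
      · filter_upwards [self_mem_nhdsWithin] with v hv
        exact lt_min (abs_pos.2 hv) (Real.exp_pos _)
    have h2 := Real.tendsto_log_nhdsGT_zero.comp h1
    have h3 := (Filter.tendsto_neg_atBot_atTop.comp h2).inv_tendsto_atTop
    refine h3.congr ?_
    intro v
    simp [psi]
  · have h := log_min_neg hu
    have hp : 0 < min |u| (Real.exp (-2)) := lt_min (abs_pos.2 hu) (Real.exp_pos _)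
    unfold psi
    refine ContinuousAt.div continuousAt_const (ContinuousAt.neg (ContinuousAt.log ?_ hp.ne')) ?_
    · fun_prop
    · linarith

noncomputable def G (r : ℝ) : ℝ := ∫ u in (0:ℝ)..r, psi u

lemma G_deriv (r : ℝ) : HasDerivAt G (psi r) r :=
  intervalIntegral.integral_hasDerivAt_right (psi_cont.intervalIntegrable _ _)
    (psi_cont.stronglyMeasurableAtFilter _ _) psi_cont.continuousAt

lemma psi_small {u : ℝ} (h0 : 0 ≤ u) (h : u ≤ Real.exp (-2)) : psi u = 1 / (-Real.log u) := by
  rw [psi, abs_of_nonneg h0, min_eq_left h]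

lemma psi_big {u : ℝ} (h : Real.exp (-2) ≤ u) : psi u = 1 / 2 := by
  have : 0 ≤ u := (Real.exp_pos _).le.trans h
  rw [psi, abs_of_nonneg this, min_eq_right h, Real.log_exp]; norm_num

lemma G_small {r : ℝ} (h0 : 0 ≤ r) (h : r ≤ Real.exp (-2)) :
    (∫ u in (0:ℝ)..r, 1 / (-Real.log u)) = G r := by
  apply intervalIntegral.integral_congr
  intro u hu
  rw [Set.uIcc_of_le h0] at hu
  exact (psi_small hu.1 (hu.2.trans h)).symm

lemma F_eq {r : ℝ} (h0 : 0 ≤ r) : F r = G r := by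
  unfold F
  split_ifs with h
  · exact G_small h0 h
  · push Not at h
    rw [G_small (Real.exp_pos _).le le_rfl, G, G,
      ← intervalIntegral.integral_add_adjacent_intervals
        (psi_cont.intervalIntegrable 0 (Real.exp (-2))) (psi_cont.intervalIntegrable _ r)]
    congr 1
    have : (∫ u in (Real.exp (-2))..r, psi u) = ∫ u in (Real.exp (-2))..r, (1/2 : ℝ) := by
      apply intervalIntegral.integral_congr
      intro u hu
      rw [Set.uIcc_of_le h.le] at hu
      exact psi_big hu.1
    rw [this, intervalIntegral.integral_const, smul_eq_mul, mul_comm]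

lemma G_nonneg {r : ℝ} (h : 0 ≤ r) : 0 ≤ G r :=
  intervalIntegral.integral_nonneg h (fun u _ => psi_nonneg u)

lemma G_pos {r : ℝ} (h : 0 < r) : 0 < G r :=
  intervalIntegral.intervalIntegral_pos_of_pos_on (psi_cont.intervalIntegrable _ _)
    (fun u hu => psi_pos hu.1.ne') h

abbrev Plane := EuclideanSpace ℝ (Fin 2)

lemma gRad_eq : gRad = fun x : Plane => G ‖x‖ := by
  funext x
  exact F_eq (norm_nonneg x)

lemma G_zero : G 0 = 0 := by simp [G]

lemma gRad_grad (x : Plane) : ∃ c : ℝ, HasGradientAt gRad (c • x) x := by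
  rw [gRad_eq]
  by_cases hx : x = 0
  · subst hx
    refine ⟨0, ?_⟩
    have h := G_deriv 0
    rw [psi_zero, hasDerivAt_iff_isLittleO_nhds_zero] at h
    rw [hasGradientAt_iff_hasFDerivAt, hasFDerivAt_iff_isLittleO_nhds_zero]
    have hn : Filter.Tendsto (fun x : Plane => ‖x‖) (nhds 0) (nhds 0) := by
      have := (continuous_norm (E := Plane)).tendsto 0
      rwa [norm_zero] at this
    have := (h.comp_tendsto hn).of_norm_right
    simp [Function.comp_def, G_zero] at this ⊢
    exact this
  · have hn : ‖x‖ ≠ 0 := norm_ne_zero_iff.2 hx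
    refine ⟨psi ‖x‖ * ‖x‖⁻¹, ?_⟩
    rw [hasGradientAt_iff_hasFDerivAt]
    have h1 : HasFDerivAt (fun y : Plane => ‖y‖ ^ 2) _ x := (hasStrictFDerivAt_norm_sq x).hasFDerivAt
    have h2 := h1.sqrt (pow_ne_zero 2 hn)
    simp only [Real.sqrt_sq (norm_nonneg _)] at h2
    have h3 := (G_deriv ‖x‖).comp_hasFDerivAt x h2
    refine h3.congr_fderiv ?_
    ext y
    simp
    field_simp

lemma gRad_nonneg (x : Plane) : 0 ≤ gRad x := by
  rw [gRad_eq]; exact G_nonneg (norm_nonneg x)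

lemma gRad_eq_zero {x : Plane} (h : gRad x ≤ 0) : x = 0 := by
  by_contra hx
  rw [gRad_eq] at h
  exact absurd (G_pos (norm_pos_iff.2 hx)) (not_lt.2 h)

lemma coord {Y : ℝ → Plane} {v : Plane} {t : ℝ} (h : HasDerivAt Y v t) (i : Fin 2) :
    HasDerivAt (fun s => Y s i) (v i) t :=
  (EuclideanSpace.proj (𝕜 := ℝ) i : Plane →L[ℝ] ℝ).hasFDerivAt.comp_hasDerivAt t h

/-- A function with zero derivative on `(0,∞)` and limit `0` at `0⁺` vanishes. -/
lemma zero_of_deriv {f : ℝ → ℝ} (hf : ∀ t > (0:ℝ), HasDerivAt f 0 t)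
    (h0 : Filter.Tendsto f (nhdsWithin 0 (Set.Ioi 0)) (nhds 0)) : ∀ t > (0:ℝ), f t = 0 := by
  intro t ht
  have hc : ∀ s > (0:ℝ), f s = f t := by
    intro s hs
    exact isOpen_Ioi.is_const_of_deriv_eq_zero isPreconnected_Ioi
      (fun u hu => (hf u hu).differentiableAt.differentiableWithinAt)
      (fun u hu => (hf u hu).deriv) hs ht
  have h1 : Filter.Tendsto f (nhdsWithin 0 (Set.Ioi 0)) (nhds (f t)) := by
    refine tendsto_const_nhds.congr' ?_
    filter_upwards [self_mem_nhdsWithin] with s hs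
    exact (hc s hs).symm
  exact tendsto_nhds_unique h1 h0

end RadialAux

open RadialAux

/-- for the radial potential `g(x) = F(‖x‖)`, any solution of the Nesterov
flow starting at `X₀ ≠ 0` (with zero initial velocity) stays on the ray through `X₀`:
there is a continuous `ρ : [0,∞) → ℝ` with `ρ(0) = 1` and `X(t) = ρ(t)·X₀` for `t ≥ 0`. -/
theorem radial_flow_stays_on_ray
    (X₀ : EuclideanSpace ℝ (Fin 2)) (hX₀ : X₀ ≠ 0)
    (X X' X'' : ℝ → EuclideanSpace ℝ (Fin 2))
    (hXcont : ContinuousOn X (Set.Ici 0))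
    (hX' : ∀ t > (0:ℝ), HasDerivAt X (X' t) t)
    (hX'' : ∀ t > (0:ℝ), HasDerivAt X' (X'' t) t)
    (hX''cont : ContinuousOn X'' (Set.Ioi 0))
    (hX0 : X 0 = X₀)
    (hX'0 : Filter.Tendsto X' (nhdsWithin 0 (Set.Ioi 0)) (nhds 0))
    (hODE : ∀ t > (0:ℝ), X'' t + (3 / t) • X' t + gradient gRad (X t) = 0) :
    ∃ ρ : ℝ → ℝ, ContinuousOn ρ (Set.Ici 0) ∧ ρ 0 = 1 ∧
      ∀ t ≥ (0:ℝ), X t = ρ t • X₀ := by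
  have hXt : Filter.Tendsto X (nhdsWithin 0 (Set.Ioi 0)) (nhds X₀) := by
    have := (hXcont 0 Set.self_mem_Ici).tendsto
    rw [hX0] at this
    exact this.mono_left (nhdsWithin_mono _ Set.Ioi_subset_Ici_self)
  have hlim : ∀ {Y : ℝ → Plane} {v : Plane},
      Filter.Tendsto Y (nhdsWithin 0 (Set.Ioi 0)) (nhds v) → ∀ i : Fin 2,
      Filter.Tendsto (fun s => Y s i) (nhdsWithin 0 (Set.Ioi 0)) (nhds (v i)) := by
    intro Y v h i
    exact ((EuclideanSpace.proj (𝕜 := ℝ) i : Plane →L[ℝ] ℝ).continuous.tendsto v).comp h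
  have hid : Filter.Tendsto (fun t : ℝ => t) (nhdsWithin 0 (Set.Ioi 0)) (nhds 0) :=
    nhdsWithin_le_nhds
  -- the radial form of the equation
  have hrad : ∀ t > (0:ℝ), ∃ c : ℝ, HasGradientAt gRad (c • X t) (X t) ∧
      ∀ i, X'' t i = -(3 / t) * X' t i - c * X t i := by
    intro t ht
    obtain ⟨c, hc⟩ := gRad_grad (X t)
    refine ⟨c, hc, fun i => ?_⟩
    have h := hODE t ht
    rw [hc.gradient] at h
    have h' := congrArg (fun v : Plane => v i) h
    simp at h'
    linarith
  -- angular momentum vanishes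
  have hL : ∀ t > (0:ℝ), X t 0 * X' t 1 - X t 1 * X' t 0 = 0 := by
    have h := zero_of_deriv (f := fun t => t ^ 3 * (X t 0 * X' t 1 - X t 1 * X' t 0)) ?_ ?_
    · intro t ht
      have := h t ht
      exact (mul_eq_zero.1 this).resolve_left (pow_ne_zero 3 ht.ne')
    · intro t ht
      obtain ⟨c, -, hc⟩ := hrad t ht
      have hd := ((hasDerivAt_id t).pow 3).mul
        (((coord (hX' t ht) 0).mul (coord (hX'' t ht) 1)).sub
          ((coord (hX' t ht) 1).mul (coord (hX'' t ht) 0)))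
      refine hd.congr_deriv ?_
      have := ht.ne'
      simp [hc]
      field_simp
      ring
    · have := (hid.pow 3).mul (((hlim hXt 0).mul (hlim hX'0 1)).sub
          ((hlim hXt 1).mul (hlim hX'0 0)))
      simpa using this
  -- energy never vanishes
  have hN : ∀ t > (0:ℝ), X t 0 ^ 2 + X t 1 ^ 2 + (X' t 0 ^ 2 + X' t 1 ^ 2) ≠ 0 := by
    intro T hT h0
    have hmono : MonotoneOn (fun t => t ^ 6 * ((X' t 0 ^ 2 + X' t 1 ^ 2) / 2 + gRad (X t)))
        (Set.Ioi 0) := by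
      have hd : ∀ t > (0:ℝ), HasDerivAt
          (fun t => t ^ 6 * ((X' t 0 ^ 2 + X' t 1 ^ 2) / 2 + gRad (X t)))
          (6 * t ^ 5 * gRad (X t)) t := by
        intro t ht
        obtain ⟨c, hg, hc⟩ := hrad t ht
        have hg' := hg.hasFDerivAt.comp_hasDerivAt t (hX' t ht)
        have hd := ((hasDerivAt_id t).pow 6).mul
          (((((coord (hX'' t ht) 0).pow 2).add ((coord (hX'' t ht) 1).pow 2)).div_const 2).add hg')
        refine hd.congr_deriv ?_
        have := ht.ne'
        simp [hc, PiLp.inner_apply, Fin.sum_univ_two]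
        field_simp
        ring
      refine monotoneOn_of_deriv_nonneg (convex_Ioi 0)
        (fun t ht => (hd t ht).continuousAt.continuousWithinAt) ?_ ?_
      · rw [interior_Ioi]
        exact fun t ht => (hd t ht).differentiableAt.differentiableWithinAt
      · rw [interior_Ioi]
        intro t ht
        rw [(hd t ht).deriv]
        have := gRad_nonneg (X t)
        have ht' : (0:ℝ) < t := ht
        positivity
    have hxT : X T = 0 := by
      ext i
      fin_cases i <;> simp <;> nlinarith [sq_nonneg (X T 0), sq_nonneg (X T 1), sq_nonneg (X' T 0), sq_nonneg (X' T 1)]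
    have hvT : X' T 0 ^ 2 + X' T 1 ^ 2 = 0 := by
      nlinarith [sq_nonneg (X T 0), sq_nonneg (X T 1), sq_nonneg (X' T 0), sq_nonneg (X' T 1)]
    have hz : ∀ t, 0 < t → t ≤ T → X t = 0 := by
      intro t ht htT
      have h := hmono (Set.mem_Ioi.2 ht) (Set.mem_Ioi.2 hT) htT
      simp only [hvT, hxT] at h
      rw [gRad_eq] at h
      simp only [norm_zero, G_zero, zero_div, add_zero, mul_zero] at h
      apply gRad_eq_zero
      rw [gRad_eq]
      have h6 : 0 < t ^ 6 := by positivity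
      have := nonpos_of_mul_nonpos_right h h6
      have h7 : 0 ≤ (X' t 0 ^ 2 + X' t 1 ^ 2) / 2 := by positivity
      linarith
    have h1 : Filter.Tendsto X (nhdsWithin 0 (Set.Ioi 0)) (nhds 0) := by
      refine tendsto_const_nhds.congr' ?_
      filter_upwards [Ioc_mem_nhdsGT hT] with s hs
      exact (hz s hs.1 hs.2).symm
    exact hX₀ (tendsto_nhds_unique hXt h1)
  have hX₀n : X₀ 0 ^ 2 + X₀ 1 ^ 2 ≠ 0 := by
    intro h
    apply hX₀
    ext i
    fin_cases i <;> simp <;> nlinarith [sq_nonneg (X₀ 0), sq_nonneg (X₀ 1)]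
  have hw : ∀ t > (0:ℝ), X₀ 0 * X t 1 - X₀ 1 * X t 0 = 0 := by
    have h := zero_of_deriv (f := fun t =>
      ((X₀ 0 * X t 1 - X₀ 1 * X t 0) ^ 2 + (X₀ 0 * X' t 1 - X₀ 1 * X' t 0) ^ 2) /
        (X t 0 ^ 2 + X t 1 ^ 2 + (X' t 0 ^ 2 + X' t 1 ^ 2))) ?_ ?_
    · intro t ht
      have h1 := (div_eq_zero_iff.1 (h t ht)).resolve_right (hN t ht)
      nlinarith [sq_nonneg (X₀ 0 * X t 1 - X₀ 1 * X t 0),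
        sq_nonneg (X₀ 0 * X' t 1 - X₀ 1 * X' t 0)]
    · intro t ht
      obtain ⟨c, -, hc⟩ := hrad t ht
      have a0 := coord (hX' t ht) 0
      have a1 := coord (hX' t ht) 1
      have b0 := coord (hX'' t ht) 0
      have b1 := coord (hX'' t ht) 1
      have hd := ((((a1.const_mul (X₀ 0)).sub (a0.const_mul (X₀ 1))).pow 2).add
        (((b1.const_mul (X₀ 0)).sub (b0.const_mul (X₀ 1))).pow 2)).div
        (((a0.pow 2).add (a1.pow 2)).add ((b0.pow 2).add (b1.pow 2))) (hN t ht)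
      refine hd.congr_deriv ?_
      have hLt := hL t ht
      have hNt := hN t ht
      obtain ⟨e0, e1, a, b, h0, h1, h2, h3⟩ : ∃ e0 e1 a b : ℝ, X t 0 = a * e0 ∧ X t 1 = a * e1 ∧
          X' t 0 = b * e0 ∧ X' t 1 = b * e1 := by
        by_cases hx : X t 0 ^ 2 + X t 1 ^ 2 = 0
        · refine ⟨X' t 0, X' t 1, 0, 1, ?_, ?_, by ring, by ring⟩ <;>
            nlinarith [sq_nonneg (X t 0), sq_nonneg (X t 1)]
        · refine ⟨X t 0, X t 1, 1,
            (X t 0 * X' t 0 + X t 1 * X' t 1) / (X t 0 ^ 2 + X t 1 ^ 2), by ring, by ring, ?_, ?_⟩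
          · field_simp
            linear_combination (-X t 1) * hLt
          · field_simp
            linear_combination (X t 0) * hLt
      rw [div_eq_zero_iff]
      left
      simp only [hc, h0, h1, h2, h3, Pi.add_apply, Pi.sub_apply, Pi.pow_apply]
      push_cast
      ring
    · have hnum := ((((hlim hXt 1).const_mul (X₀ 0)).sub ((hlim hXt 0).const_mul (X₀ 1))).pow 2).add
        ((((hlim hX'0 1).const_mul (X₀ 0)).sub ((hlim hX'0 0).const_mul (X₀ 1))).pow 2)
      have hden := (((hlim hXt 0).pow 2).add ((hlim hXt 1).pow 2)).add
        (((hlim hX'0 0).pow 2).add ((hlim hX'0 1).pow 2))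
      have := hnum.div hden (by simpa using hX₀n)
      refine this.trans_eq ?_
      congr 1
      simp
      left
      ring
  refine ⟨fun t => (X₀ 0 * X t 0 + X₀ 1 * X t 1) / (X₀ 0 ^ 2 + X₀ 1 ^ 2), ?_, ?_, ?_⟩
  · have hco : ∀ i : Fin 2, ContinuousOn (fun t => X t i) (Set.Ici 0) := fun i =>
      (EuclideanSpace.proj (𝕜 := ℝ) i : Plane →L[ℝ] ℝ).continuous.comp_continuousOn hXcont
    exact ((continuousOn_const.mul (hco 0)).add (continuousOn_const.mul (hco 1))).div_const _
  · simp only [hX0]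
    rw [div_eq_one_iff_eq hX₀n]
    ring
  · intro t ht
    have hwt : X₀ 0 * X t 1 - X₀ 1 * X t 0 = 0 := by
      rcases eq_or_lt_of_le ht with h | h
      · rw [← h, hX0]; ring
      · exact hw t h
    ext i
    fin_cases i
    · simp
      field_simp
      linear_combination (-X₀ 1) * hwt
    · simp
      field_simp
      linear_combination (X₀ 0) * hwt
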